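/- arXiv:1610.01689 — 2 statements merged into one kernel-verified Lean document; each statement's English description precedes it below -/
import Mathlib

section
/- Under the stated second-order growth hypotheses along the arithmetic progression n ≡ n_0 (mod N), let j' be an index minimizing ρ_j := (1/dim χ_j) · Σ_{g ∈ G, ord g = e_2} χ_j(g)·ε(g), and for each i set f_i'(g) := χ_i(g) − (dim χ_i / dim χ_{j'})·χ_{j'}(g) and S_i := Σ_{g ∈ G, ord g = e_2} f_i'(g)·ε(g). Then for every index i with S_i ≠ 0, the multiplicity m_i'(n) of the i-th irreducible representation in the non-free part of K_n satisfies m_i'(n) ~ (C(n,e_2)·exp(D(n)/e_2) / |G|) · S_i as n → ∞ with n ≡ n_0 (mod N). -/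
/-!
The identity contributes `c 1 n / |G|` to each normalized multiplicity `m j n / dim (V j)`, the same
amount for every `j`, so it shifts the free-part multiplicity by that amount and cancels from the
non-free part. What is left of `m j n / dim (V j)` is `(ρ j / |G|) A n + o(A n)`, where
`A n = C(n, e2) exp (D n / e2)`; the conjugate on the characters in `m j n`, absent from `ρ j`,
disappears on taking real parts. Since `A` tends to infinity the floors change nothing at this
scale, and the minimum over `j` has leading coefficient `ρ j' / |G|`. Hence
`m' i n = dim (V i) (ρ i - ρ j') A n / |G| + o(A n)`, and `dim (V i) (ρ i - ρ j') = S i`.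
-/

open CategoryTheory Filter Asymptotics
open scoped Topology BigOperators

section Asymptotics

variable {ι α : Type*} {L : Filter α}

theorem tendsto_inf'_sub_div {s : Finset ι} (hs : s.Nonempty) {x : ι → α → ℝ} {b A : α → ℝ}
    {r : ι → ℝ} (hA : ∀ᶠ n in L, 0 ≤ A n)
    (hx : ∀ j ∈ s, Tendsto (fun n => (x j n - b n) / A n) L (𝓝 (r j))) :
    Tendsto (fun n => (s.inf' hs (fun j => x j n) - b n) / A n) L (𝓝 (s.inf' hs r)) := by
  refine (Tendsto.finset_inf'_nhds_apply hs hx).congr' ?_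
  filter_upwards [hA] with n hn
  have hmono : Monotone fun t : ℝ => (t - b n) / A n := fun t u htu => by dsimp only; gcongr
  exact (Finset.apply_inf'_eq_inf'_comp hs (fun t => (t - b n) / A n) fun _ _ => hmono.map_min).symm

theorem tendsto_natFloor_sub_div {y b A : α → ℝ} {r : ℝ} (hy : ∀ᶠ n in L, 0 ≤ y n)
    (hA : Tendsto A L atTop) (hlim : Tendsto (fun n => (y n - b n) / A n) L (𝓝 r)) :
    Tendsto (fun n => ((⌊y n⌋₊ : ℝ) - b n) / A n) L (𝓝 r) := by
  have hfract : Tendsto (fun n => (y n - ⌊y n⌋₊) / A n) L (𝓝 0) :=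
    tendsto_bdd_div_atTop_nhds_zero
      (hy.mono fun n hn => sub_nonneg.mpr (Nat.floor_le hn))
      (.of_forall fun n => (sub_left_lt_of_lt_add (Nat.lt_floor_add_one (y n))).le) hA
  simpa [← sub_div] using hlim.sub hfract

theorem tendsto_sum_mul_div {X 𝕜 : Type*} [NormedField 𝕜] {s T : Finset X} (hTs : T ⊆ s)
    {c : X → α → 𝕜} {a : X → 𝕜} {A : α → 𝕜} (hA : ∀ᶠ n in L, A n ≠ 0)
    (hdom : ∀ g ∈ T, (fun n => c g n - a g * A n) =o[L] A)
    (hrest : ∀ g ∈ s, g ∉ T → c g =o[L] A) (w : X → 𝕜) :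
    Tendsto (fun n => (∑ g ∈ s, w g * c g n) / A n) L (𝓝 (∑ g ∈ T, w g * a g)) := by
  classical
  have hterm : ∀ g ∈ s, Tendsto (fun n => c g n / A n) L (𝓝 (if g ∈ T then a g else 0)) := by
    intro g hg
    split_ifs with hgT
    · have hlim := (hdom g hgT).tendsto_div_nhds_zero.add_const (a g)
      rw [zero_add] at hlim
      refine hlim.congr' ?_
      filter_upwards [hA] with n hn
      field_simp
      ring
    · exact (hrest g hg hgT).tendsto_div_nhds_zero
  have hsum := tendsto_finsetSum s fun g hg => (hterm g hg).const_mul (w g)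
  simpa only [Finset.sum_div, mul_div_assoc, mul_ite, mul_zero, ← Finset.sum_filter,
    Finset.filter_mem_eq_inter, Finset.inter_eq_right.mpr hTs] using hsum

end Asymptotics

section FreePart

variable {ι α : Type*} [Fintype ι] [Nonempty ι]

/-- The free-part multiplicity `min_j ⌊m_j / d_j⌋`: the number of copies of the regular
representation contained in a representation with multiplicities `m`, when the irreducible
representations have dimensions `d`. -/
def freeMultiplicity (d m : ι → ℕ) : ℕ :=
  Finset.univ.inf' Finset.univ_nonempty fun j => m j / d j

/-- The multiplicities `m_i'` of the non-free part, what remains of `m` after removing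
`freeMultiplicity d m` copies of the regular representation. They are encoded as integers, so that
the subtraction is not truncated. -/
def nonfreeMultiplicity (d m : ι → ℕ) (i : ι) : ℤ :=
  m i - freeMultiplicity d m * d i

theorem freeMultiplicity_eq_natFloor (d m : ι → ℕ) :
    freeMultiplicity d m =
      ⌊Finset.univ.inf' Finset.univ_nonempty fun j => (m j : ℝ) / d j⌋₊ := by
  rw [Finset.apply_inf'_eq_inf'_comp _ _ fun _ _ => Nat.floor_mono.map_min]
  simp only [freeMultiplicity, Function.comp_def, Nat.floor_div_eq_div]

variable {L : Filter α} {d : ι → ℕ} {m : ι → α → ℕ} {b A : α → ℝ} {r : ι → ℝ}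

theorem tendsto_freeMultiplicity_sub_div (hA : Tendsto A L atTop)
    (hm : ∀ j, Tendsto (fun n => ((m j n : ℝ) / d j - b n) / A n) L (𝓝 (r j))) :
    Tendsto (fun n => ((freeMultiplicity d (m · n) : ℝ) - b n) / A n) L
      (𝓝 (Finset.univ.inf' Finset.univ_nonempty r)) := by
  simp only [freeMultiplicity_eq_natFloor]
  have hnonneg (n : α) : 0 ≤ Finset.univ.inf' Finset.univ_nonempty fun j => (m j n : ℝ) / d j :=
    Finset.le_inf' _ _ fun j _ => by positivity
  exact tendsto_natFloor_sub_div (.of_forall hnonneg) hA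
    (tendsto_inf'_sub_div _ (hA.eventually_ge_atTop 0) fun j _ => hm j)

theorem tendsto_nonfreeMultiplicity_div (hA : Tendsto A L atTop)
    (hm : ∀ j, Tendsto (fun n => ((m j n : ℝ) / d j - b n) / A n) L (𝓝 (r j)))
    {j' : ι} (hj' : ∀ j, r j' ≤ r j) {i : ι} (hdi : d i ≠ 0) :
    Tendsto (fun n => (nonfreeMultiplicity d (m · n) i : ℝ) / A n) L
      (𝓝 (d i * (r i - r j'))) := by
  have hmin : Finset.univ.inf' Finset.univ_nonempty r = r j' :=
    le_antisymm (Finset.inf'_le _ (Finset.mem_univ j')) (Finset.le_inf' _ _ fun j _ => hj' j)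
  have hfree := tendsto_freeMultiplicity_sub_div hA hm
  rw [hmin] at hfree
  refine (((hm i).sub hfree).const_mul (d i : ℝ)).congr fun n => ?_
  simp only [nonfreeMultiplicity]
  push_cast
  field_simp
  ring

end FreePart

section Characters

theorem nontrivial_of_simple {R G : Type*} [CommRing R] [Monoid G] (V : FDRep R G) [Simple V] :
    Nontrivial V := by
  by_contra hV
  rw [not_nontrivial_iff_subsingleton] at hV
  refine id_nonzero V ?_
  ext x
  exact Subsingleton.elim _ _

theorem re_sum_mul_ofReal {X : Type*} (s : Finset X) (z : X → ℂ) (b : X → ℝ) :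
    (∑ g ∈ s, z g * (b g : ℂ)).re = ∑ g ∈ s, (z g).re * b g := by
  simp only [Complex.re_sum, Complex.re_mul_ofReal]

theorem sum_sub_div_mul_mul_eq {X k : Type*} [Field k] (T : Finset X) (χ ψ a : X → k) {d : k}
    (hd : d ≠ 0) (e : k) :
    ∑ g ∈ T, (χ g - d / e * ψ g) * a g =
      d * (d⁻¹ * ∑ g ∈ T, χ g * a g - e⁻¹ * ∑ g ∈ T, ψ g * a g) := by
  simp only [sub_mul, Finset.sum_sub_distrib, mul_assoc, ← Finset.mul_sum]
  field_simp

variable {G : Type*} [Monoid G] [Fintype G]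

theorem natCast_div_finrank_sub_eq [DecidableEq G] (V : FDRep ℂ G) [Nontrivial V] {m : ℕ}
    {c : G → ℝ}
    (hm : (m : ℂ) = (Fintype.card G : ℂ)⁻¹ * ∑ g, (starRingEnd ℂ) (V.character g) * (c g : ℂ)) :
    (m : ℝ) / Module.finrank ℂ V - c 1 / Fintype.card G =
      (∑ g ∈ Finset.univ.erase 1, (V.character g).re * c g) /
        Module.finrank ℂ V / Fintype.card G := by
  have hd : (Module.finrank ℂ V : ℝ) ≠ 0 := mod_cast Module.finrank_pos.ne'
  have hm_re : (m : ℝ) = (∑ g, (V.character g).re * c g) / Fintype.card G := by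
    simpa only [← div_eq_inv_mul, Complex.div_natCast_re, re_sum_mul_ofReal, Complex.conj_re,
      Complex.natCast_re] using congrArg Complex.re hm
  rw [hm_re, ← Finset.add_sum_erase _ _ (Finset.mem_univ 1), FDRep.char_one, Complex.natCast_re]
  field_simp
  ring

variable {α : Type*} {L : Filter α} {c : G → α → ℝ} {A : α → ℝ} {T : Finset G} {a : G → ℝ}

theorem tendsto_natCast_div_finrank_sub_div (V : FDRep ℂ G) [Nontrivial V] {m : α → ℕ}
    (hm : ∀ n, (m n : ℂ) =
      (Fintype.card G : ℂ)⁻¹ * ∑ g, (starRingEnd ℂ) (V.character g) * (c g n : ℂ))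
    (hA : ∀ᶠ n in L, A n ≠ 0) (hT : 1 ∉ T)
    (hdom : ∀ g ∈ T, (fun n => c g n - a g * A n) =o[L] A)
    (hrest : ∀ g ∉ T, g ≠ 1 → c g =o[L] A) {ρ : ℝ}
    (hρ : (ρ : ℂ) = (Module.finrank ℂ V : ℂ)⁻¹ * ∑ g ∈ T, V.character g * (a g : ℂ)) :
    Tendsto (fun n => ((m n : ℝ) / Module.finrank ℂ V - c 1 n / Fintype.card G) / A n) L
      (𝓝 (ρ / Fintype.card G)) := by
  classical
  have hρ_re : ρ = (∑ g ∈ T, (V.character g).re * a g) / Module.finrank ℂ V := by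
    simpa only [← div_eq_inv_mul, Complex.div_natCast_re, re_sum_mul_ofReal,
      Complex.ofReal_re] using congrArg Complex.re hρ
  have hTsub : T ⊆ Finset.univ.erase 1 :=
    Finset.subset_erase.mpr ⟨Finset.subset_univ T, hT⟩
  have hsum := tendsto_sum_mul_div hTsub hA hdom
    (fun g hg hgT => hrest g hgT (Finset.ne_of_mem_erase hg)) fun g => (V.character g).re
  rw [hρ_re]
  refine ((hsum.div_const _).div_const _).congr fun n => ?_
  rw [natCast_div_finrank_sub_eq V (hm n)]
  ring

theorem moonshine_nonfree_part_asymptotics_general {ι : Type*} [Fintype ι] [Nonempty ι]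
    (V : ι → FDRep ℂ G) [∀ j, Nontrivial (V j)] {m : ι → α → ℕ}
    (hm : ∀ j n, (m j n : ℂ) =
      (Fintype.card G : ℂ)⁻¹ * ∑ g, (starRingEnd ℂ) ((V j).character g) * (c g n : ℂ))
    (hA : Tendsto A L atTop) (hT : 1 ∉ T)
    (hdom : ∀ g ∈ T, (fun n => c g n - a g * A n) =o[L] A)
    (hrest : ∀ g ∉ T, g ≠ 1 → c g =o[L] A) {ρ : ι → ℝ}
    (hρ : ∀ j, (ρ j : ℂ) =
      (Module.finrank ℂ (V j) : ℂ)⁻¹ * ∑ g ∈ T, (V j).character g * (a g : ℂ))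
    {j' : ι} (hj' : ∀ j, ρ j' ≤ ρ j) {i : ι} {S : ℝ}
    (hS : (S : ℂ) = ∑ g ∈ T, ((V i).character g -
      (Module.finrank ℂ (V i) : ℂ) / (Module.finrank ℂ (V j') : ℂ) * (V j').character g) *
        (a g : ℂ)) :
    Tendsto (fun n => (nonfreeMultiplicity (fun j => Module.finrank ℂ (V j)) (m · n) i : ℝ) /
      (A n / Fintype.card G)) L (𝓝 S) := by
  have hdi : Module.finrank ℂ (V i) ≠ 0 := Module.finrank_pos.ne'
  have hS_eq : S = Module.finrank ℂ (V i) * (ρ i - ρ j') := by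
    rw [sum_sub_div_mul_mul_eq _ _ _ _ (Nat.cast_ne_zero.mpr hdi), ← hρ, ← hρ] at hS
    exact_mod_cast hS
  have hlim (j : ι) := tendsto_natCast_div_finrank_sub_div (V j) (hm j)
    (hA.eventually_ne_atTop 0) hT hdom hrest (hρ j)
  have hmin (j : ι) : ρ j' / Fintype.card G ≤ ρ j / Fintype.card G := by
    gcongr
    exact hj' j
  have hnonfree := (tendsto_nonfreeMultiplicity_div hA hlim hmin hdi).mul_const (Fintype.card G : ℝ)
  convert hnonfree using 2
  · rw [div_div_eq_mul_div, div_mul_eq_mul_div]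
  · rw [hS_eq]
    field_simp

end Characters

/-- `G` is a finite group, `V 1, …, V s` a complete list of the pairwise
non-isomorphic irreducible complex representations of `G` with characters `χ i`, `c g n` an
integer-valued class function of `g` realized as the character of a representation `K n`, and
`m i n` the multiplicity of `V i` in `K n`.  `e2` is the least order of a non-identity element,
`r1 n = min_j ⌊m_j(n)/dim χ_j⌋` is the free-part multiplicity and
`m' i n = m i n − r1 n · dim χ_i` the multiplicity of `V i` in the non-free part of `K n`.
Under the second-order growth hypotheses along the arithmetic progression `n ≡ n0 (mod N)`
(signs `ε` constant on conjugacy classes, `c g n = ε g · C(n,e2)·exp(D(n)/e2)·(1+o(1))` for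
`ord g = e2`, `c g n = o(C(n,e2)·exp(D(n)/e2))` for `ord g > e2`, and
`C(n,e2)·exp(D(n)/e2) → ∞`), if `j'` minimizes
`ρ_j = (1/dim χ_j)·Σ_{ord g = e2} χ_j(g)·ε(g)`, and
`S i = Σ_{ord g = e2} (χ_i(g) − (dim χ_i/dim χ_{j'})·χ_{j'}(g))·ε(g)` is nonzero, then
`m' i n ~ (C(n,e2)·exp(D(n)/e2)/|G|) · S i` along the progression. -/
theorem moonshine_nonfree_part_asymptotics
    (G : Type) [Group G] [Fintype G]
    (s : ℕ) (hs : 0 < s) (V : Fin s → FDRep ℂ G)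
    (hsimple : ∀ i, Simple (V i))
    (hdistinct : ∀ i j, i ≠ j → IsEmpty (V i ≅ V j))
    (hcomplete : ∀ W : FDRep ℂ G, Simple W → ∃ i, Nonempty (W ≅ V i))
    (c : G → ℕ → ℤ)
    (hclass : ∀ g h : G, IsConj g h → c g = c h)
    (K : ℕ → FDRep ℂ G)
    (hK : ∀ (n : ℕ) (g : G), (K n).character g = (c g n : ℂ))
    (m : Fin s → ℕ → ℕ)
    (hm : ∀ i n, (m i n : ℂ) =
      (Fintype.card G : ℂ)⁻¹ * ∑ g : G, (starRingEnd ℂ) ((V i).character g) * (c g n : ℂ))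
    (e2 : ℕ) (he2 : IsLeast {k : ℕ | ∃ g : G, g ≠ 1 ∧ orderOf g = k} e2)
    (N : ℕ) (hN : 1 ≤ N) (n0 : ℕ)
    (L : Filter ℕ) (hL : L = atTop ⊓ 𝓟 {n : ℕ | n % N = n0 % N})
    (ε : G → ℤ) (hε : ∀ g, ε g = 1 ∨ ε g = -1)
    (hεclass : ∀ g h : G, IsConj g h → ε g = ε h)
    (C : ℕ → ℕ → ℝ) (D : ℕ → ℝ)
    (hord2 : ∀ g : G, orderOf g = e2 →
      (fun n => (c g n : ℝ) - (ε g : ℝ) * (C n e2 * Real.exp (D n / (e2 : ℝ))))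
        =o[L] fun n => C n e2 * Real.exp (D n / (e2 : ℝ)))
    (hhigher : ∀ g : G, e2 < orderOf g →
      (fun n => (c g n : ℝ)) =o[L] fun n => C n e2 * Real.exp (D n / (e2 : ℝ)))
    (htop : Tendsto (fun n => C n e2 * Real.exp (D n / (e2 : ℝ))) L atTop)
    (r1 : ℕ → ℕ)
    (hr1 : ∀ n, r1 n = Finset.univ.inf'
      (Finset.univ_nonempty_iff.mpr (Fin.pos_iff_nonempty.mp hs))
      (fun j : Fin s => m j n / Module.finrank ℂ (V j)))
    (m' : Fin s → ℕ → ℤ)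
    (hm' : ∀ i n, m' i n = (m i n : ℤ) - (r1 n : ℤ) * (Module.finrank ℂ (V i) : ℤ))
    (ρ : Fin s → ℝ)
    (hρ : ∀ j, (ρ j : ℂ) = (Module.finrank ℂ (V j) : ℂ)⁻¹ *
      ∑ g ∈ Finset.univ.filter (fun g : G => orderOf g = e2),
        (V j).character g * (ε g : ℂ))
    (j' : Fin s) (hj' : ∀ j, ρ j' ≤ ρ j)
    (S : Fin s → ℝ)
    (hS : ∀ i, (S i : ℂ) =
      ∑ g ∈ Finset.univ.filter (fun g : G => orderOf g = e2),
        ((V i).character g -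
          (Module.finrank ℂ (V i) : ℂ) / (Module.finrank ℂ (V j') : ℂ) *
            (V j').character g) * (ε g : ℂ))
    (i : Fin s) (hSi : S i ≠ 0) :
    Tendsto
      (fun n => (m' i n : ℝ) /
        (C n e2 * Real.exp (D n / (e2 : ℝ)) / (Fintype.card G : ℝ) * S i))
      L (𝓝 1) := by
  have (j : Fin s) : Nontrivial (V j) := nontrivial_of_simple (V j)
  have : Nonempty (Fin s) := ⟨j'⟩
  have one_notMem : (1 : G) ∉ Finset.univ.filter (orderOf · = e2) := by
    obtain ⟨g, hg, rfl⟩ := he2.1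
    simpa [eq_comm] using hg
  have hlim := moonshine_nonfree_part_asymptotics_general V (c := fun g n => c g n)
    (a := fun g => ε g) (by simpa using hm) htop one_notMem (by simpa using hord2)
    (fun g hgT hg => hhigher g ((he2.2 ⟨g, hg, rfl⟩).lt_of_ne' (by simpa using hgT)))
    (by simpa using hρ) hj' (by simpa using hS i)
  have hm'_eq (n : ℕ) :
      m' i n = nonfreeMultiplicity (fun j => Module.finrank ℂ (V j)) (m · n) i := by
    rw [hm', hr1]
    rfl
  simpa only [hm'_eq, div_div, div_self hSi] using hlim.div_const (S i)
end

section
/- Under the stated second-order growth hypotheses along the arithmetic progression n ≡ n_0 (mod N), for all sufficiently large n ≡ n_0 (mod N), every index j that minimizes ⌊ m_j(n) / dim χ_j ⌋ over 1 ≤ j ≤ s also minimizes the quantity ρ_j := (1/dim χ_j) · Σ_{g ∈ G, ord g = e_2} χ_j(g)·ε(g) over 1 ≤ j ≤ s. -/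
open CategoryTheory Filter Asymptotics
open scoped Topology BigOperators

/-!
The identity contributes `χ_j(1)/dim χ_j · c_1(n) = c_1(n)` to `|G| · m_j(n)/dim χ_j`, the same for
every `j`. In the difference of two such quantities it cancels, and the growth hypotheses on the
other elements leave `(ρ_i - ρ_j) F(n) + o(F(n))`, where `F(n) = C(n, e_2) exp(D(n)/e_2) → ∞`. If
`ρ_i > ρ_j`, this difference tends to infinity, so it eventually exceeds what floors can hide.
-/

section Asymptotics

variable {α : Type*} {l : Filter α}

theorem eventually_floor_lt_floor_of_tendsto_sub_atTop {R : Type*} [Ring R] [LinearOrder R]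
    [IsStrictOrderedRing R] [FloorRing R] {x y : α → R}
    (h : Tendsto (fun n => x n - y n) l atTop) : ∀ᶠ n in l, ⌊y n⌋ < ⌊x n⌋ := by
  filter_upwards [h.eventually_ge_atTop 1] with n hn
  rw [← Int.add_one_le_iff, ← Int.floor_add_one]
  exact Int.floor_le_floor (le_sub_iff_add_le'.1 hn)

theorem tendsto_atTop_of_isLittleO_sub_const_mul {𝕜 : Type*} [NormedField 𝕜] [LinearOrder 𝕜]
    [IsStrictOrderedRing 𝕜] [OrderTopology 𝕜] {f F : α → 𝕜} {r : 𝕜}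
    (hF : Tendsto F l atTop) (hr : 0 < r) (h : (fun n => f n - r * F n) =o[l] F) :
    Tendsto f l atTop := by
  have hequiv : f ~[l] fun n => r * F n := h.trans_isBigO (isBigO_self_const_mul hr.ne' F l)
  exact hequiv.symm.tendsto_atTop (hF.const_mul_atTop hr)

theorem eventually_le_of_floor_le {𝕜 : Type*} [NormedField 𝕜] [LinearOrder 𝕜]
    [IsStrictOrderedRing 𝕜] [OrderTopology 𝕜] [FloorRing 𝕜] {x y F : α → 𝕜} {u v r : 𝕜}
    (hF : Tendsto F l atTop) (hr : 0 < r)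
    (h : (fun n => x n - y n - r * (u - v) * F n) =o[l] F) :
    ∀ᶠ n in l, ⌊x n⌋ ≤ ⌊y n⌋ → u ≤ v := by
  rcases le_or_gt u v with huv | hvu
  · exact Eventually.of_forall fun _ _ => huv
  · have hsub : Tendsto (fun n => x n - y n) l atTop :=
      tendsto_atTop_of_isLittleO_sub_const_mul hF (mul_pos hr (sub_pos.2 hvu)) h
    filter_upwards [eventually_floor_lt_floor_of_tendsto_sub_atTop hsub] with n hlt hle
    exact absurd hle hlt.not_ge

theorem isLittleO_sum_mul_sub {ι 𝕜 : Type*} [SeminormedRing 𝕜] {s : Finset ι} {w a : ι → 𝕜}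
    {c : ι → α → 𝕜} {F : α → 𝕜}
    (h : ∀ i ∈ s, w i ≠ 0 → (fun n => c i n - a i * F n) =o[l] F) :
    (fun n => ∑ i ∈ s, w i * c i n - (∑ i ∈ s, w i * a i) * F n) =o[l] F := by
  have hterm : ∀ i ∈ s, (fun n => w i * (c i n - a i * F n)) =o[l] F := fun i hi => by
    by_cases hw : w i = 0
    · simpa only [hw, zero_mul] using isLittleO_zero F l
    · exact (h i hi hw).const_mul_left (w i)
  refine (IsLittleO.fun_sum hterm).congr_left fun n => ?_
  simp only [mul_sub, Finset.sum_sub_distrib, Finset.sum_mul, mul_assoc]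

end Asymptotics

section CharacterRatio

variable {G : Type*} [Monoid G]

/-- The real part of the character ratio `χ_V(g) / dim V`. Real parts suffice because the
functions against which characters are summed here are real-valued. -/
noncomputable def reCharacterRatio (V : FDRep ℂ G) (g : G) : ℝ :=
  (V.character g).re / Module.finrank ℂ V

theorem reCharacterRatio_one (V : FDRep ℂ G) [Nontrivial V] : reCharacterRatio V 1 = 1 := by
  have hdim : (Module.finrank ℂ V : ℝ) ≠ 0 := Nat.cast_ne_zero.2 Module.finrank_pos.ne'
  rw [reCharacterRatio, FDRep.char_one, Complex.natCast_re, div_self hdim]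

theorem nontrivial_of_simple_fdRep {k : Type*} [Field k] (V : FDRep k G) [Simple V] :
    Nontrivial V := by
  by_contra hV
  have : Subsingleton V := not_nontrivial_iff_subsingleton.1 hV
  apply id_nonzero V
  ext v
  exact Subsingleton.elim (α := V) _ _

variable [Fintype G]

theorem eq_sum_reCharacterRatio_mul {V : FDRep ℂ G} {a : G → ℝ} {r : ℝ}
    (h : (r : ℂ) = (Module.finrank ℂ V : ℂ)⁻¹ * ∑ g, V.character g * (a g : ℂ)) :
    r = ∑ g, reCharacterRatio V g * a g := by
  have hre := congrArg Complex.re h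
  rw [← Complex.ofReal_natCast, ← Complex.ofReal_inv, Complex.re_ofReal_mul] at hre
  simpa only [Complex.ofReal_re, Complex.re_sum, Complex.re_mul_ofReal, Finset.mul_sum,
    reCharacterRatio, div_eq_inv_mul, mul_assoc] using hre

theorem div_finrank_eq_sum_reCharacterRatio_mul {V : FDRep ℂ G} {c : G → ℝ} {m : ℝ}
    (h : (m : ℂ) = (Fintype.card G : ℂ)⁻¹ * ∑ g, starRingEnd ℂ (V.character g) * (c g : ℂ)) :
    m / Module.finrank ℂ V = (Fintype.card G : ℝ)⁻¹ * ∑ g, reCharacterRatio V g * c g := by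
  have hre := congrArg Complex.re h
  rw [← Complex.ofReal_natCast, ← Complex.ofReal_inv, Complex.re_ofReal_mul] at hre
  simp only [Complex.ofReal_re, Complex.re_sum, Complex.re_mul_ofReal, Complex.conj_re] at hre
  simp only [hre, reCharacterRatio, div_mul_eq_mul_div, Finset.sum_div, mul_div_assoc]

variable {α : Type*} {l : Filter α} {F : α → ℝ}

theorem isLittleO_sub_sum_reCharacterRatio_mul (V W : FDRep ℂ G) [Nontrivial V] [Nontrivial W]
    {c : G → α → ℝ} {a : G → ℝ} (hc : ∀ g ≠ 1, (fun n => c g n - a g * F n) =o[l] F) :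
    (fun n => ∑ g, reCharacterRatio V g * c g n - ∑ g, reCharacterRatio W g * c g n -
      (∑ g, reCharacterRatio V g * a g - ∑ g, reCharacterRatio W g * a g) * F n) =o[l] F := by
  simp only [← Finset.sum_sub_distrib, ← sub_mul]
  refine isLittleO_sum_mul_sub fun g _ hg => hc g ?_
  rintro rfl
  exact hg (by rw [reCharacterRatio_one, reCharacterRatio_one, sub_self])

end CharacterRatio

theorem isLittleO_sub_ite_orderOf_mul {G R α : Type*} [Monoid G] [SeminormedRing R]
    {l : Filter α} {c : G → α → R} {ε : G → R} {F : α → R} {k : ℕ}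
    (hk : k ∈ lowerBounds {k : ℕ | ∃ g : G, g ≠ 1 ∧ orderOf g = k})
    (heq : ∀ g, orderOf g = k → (fun n => c g n - ε g * F n) =o[l] F)
    (hlt : ∀ g, k < orderOf g → c g =o[l] F) (g : G) (hg : g ≠ 1) :
    (fun n => c g n - (if orderOf g = k then ε g else 0) * F n) =o[l] F := by
  rcases (hk ⟨g, hg, rfl⟩).eq_or_lt with h | h
  · simpa only [if_pos h.symm] using heq g h.symm
  · simpa only [if_neg h.ne', zero_mul, sub_zero] using hlt g h

theorem moonshine_floor_minimizer_eq_rho_minimizer_general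
    {G ι α : Type*} [Monoid G] [Fintype G] [Finite ι] (V : ι → FDRep ℂ G)
    (hV : ∀ i, Nontrivial (V i)) {c : G → α → ℝ} {m : ι → α → ℝ}
    (hm : ∀ i n, (m i n : ℂ) =
      (Fintype.card G : ℂ)⁻¹ * ∑ g, starRingEnd ℂ ((V i).character g) * (c g n : ℂ))
    {l : Filter α} {F : α → ℝ} (hF : Tendsto F l atTop) {a : G → ℝ}
    (hc : ∀ g ≠ 1, (fun n => c g n - a g * F n) =o[l] F) {ρ : ι → ℝ}
    (hρ : ∀ i, (ρ i : ℂ) =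
      (Module.finrank ℂ (V i) : ℂ)⁻¹ * ∑ g, (V i).character g * (a g : ℂ)) :
    ∀ᶠ n in l, ∀ i,
      (∀ j, ⌊m i n / Module.finrank ℂ (V i)⌋ ≤ ⌊m j n / Module.finrank ℂ (V j)⌋) →
      ∀ j, ρ i ≤ ρ j := by
  have hcard : (0 : ℝ) < (Fintype.card G : ℝ)⁻¹ := inv_pos.2 (Nat.cast_pos.2 Fintype.card_pos)
  have pairwise (i j : ι) : ∀ᶠ n in l,
      ⌊m i n / Module.finrank ℂ (V i)⌋ ≤ ⌊m j n / Module.finrank ℂ (V j)⌋ → ρ i ≤ ρ j := by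
    refine eventually_le_of_floor_le hF hcard ?_
    have hdiff := isLittleO_sub_sum_reCharacterRatio_mul (V i) (V j) hc
    simpa only [div_finrank_eq_sum_reCharacterRatio_mul (hm _ _),
      eq_sum_reCharacterRatio_mul (hρ _), mul_sub, sub_mul, mul_assoc] using
        hdiff.const_mul_left (Fintype.card G : ℝ)⁻¹
  filter_upwards [eventually_all.2 fun i => eventually_all.2 (pairwise i)] with n hn i hi j
  exact hn i j (hi j)

/-- `G` is a finite group, `V 1, …, V s` a complete list of the pairwise
non-isomorphic irreducible complex representations of `G` with characters `χ i`, `c g n` an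
integer-valued class function of `g` realized as the character of a representation `K n`, and
`m i n` the multiplicity of `V i` in `K n`.  `e2` is the least order of a non-identity element.
Under the second-order growth hypotheses along the arithmetic progression `n ≡ n0 (mod N)`
(signs `ε` constant on conjugacy classes, `c g n = ε g · C(n,e2)·exp(D(n)/e2)·(1+o(1))` for
`ord g = e2`, `c g n = o(C(n,e2)·exp(D(n)/e2))` for `ord g > e2`, and
`C(n,e2)·exp(D(n)/e2) → ∞`), for all sufficiently large `n ≡ n0 (mod N)` every index `j1` that
minimizes `⌊m_j(n)/dim χ_j⌋` over `1 ≤ j ≤ s` also minimizes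
`ρ_j = (1/dim χ_j)·Σ_{ord g = e2} χ_j(g)·ε(g)` over `1 ≤ j ≤ s`. -/
theorem moonshine_floor_minimizer_eq_rho_minimizer
    (G : Type) [Group G] [Fintype G]
    (s : ℕ) (hs : 0 < s) (V : Fin s → FDRep ℂ G)
    (hsimple : ∀ i, Simple (V i))
    (hdistinct : ∀ i j, i ≠ j → IsEmpty (V i ≅ V j))
    (hcomplete : ∀ W : FDRep ℂ G, Simple W → ∃ i, Nonempty (W ≅ V i))
    (c : G → ℕ → ℤ)
    (hclass : ∀ g h : G, IsConj g h → c g = c h)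
    (K : ℕ → FDRep ℂ G)
    (hK : ∀ (n : ℕ) (g : G), (K n).character g = (c g n : ℂ))
    (m : Fin s → ℕ → ℕ)
    (hm : ∀ i n, (m i n : ℂ) =
      (Fintype.card G : ℂ)⁻¹ * ∑ g : G, (starRingEnd ℂ) ((V i).character g) * (c g n : ℂ))
    (e2 : ℕ) (he2 : IsLeast {k : ℕ | ∃ g : G, g ≠ 1 ∧ orderOf g = k} e2)
    (N : ℕ) (hN : 1 ≤ N) (n0 : ℕ)
    (L : Filter ℕ) (hL : L = atTop ⊓ 𝓟 {n : ℕ | n % N = n0 % N})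
    (ε : G → ℤ) (hε : ∀ g, ε g = 1 ∨ ε g = -1)
    (hεclass : ∀ g h : G, IsConj g h → ε g = ε h)
    (C : ℕ → ℕ → ℝ) (D : ℕ → ℝ)
    (hord2 : ∀ g : G, orderOf g = e2 →
      (fun n => (c g n : ℝ) - (ε g : ℝ) * (C n e2 * Real.exp (D n / (e2 : ℝ))))
        =o[L] fun n => C n e2 * Real.exp (D n / (e2 : ℝ)))
    (hhigher : ∀ g : G, e2 < orderOf g →
      (fun n => (c g n : ℝ)) =o[L] fun n => C n e2 * Real.exp (D n / (e2 : ℝ)))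
    (htop : Tendsto (fun n => C n e2 * Real.exp (D n / (e2 : ℝ))) L atTop)
    (ρ : Fin s → ℝ)
    (hρ : ∀ j, (ρ j : ℂ) = (Module.finrank ℂ (V j) : ℂ)⁻¹ *
      ∑ g ∈ Finset.univ.filter (fun g : G => orderOf g = e2),
        (V j).character g * (ε g : ℂ))
    :
    ∀ᶠ n in L, ∀ j1 : Fin s,
      (∀ j : Fin s, m j1 n / Module.finrank ℂ (V j1) ≤ m j n / Module.finrank ℂ (V j)) →
      ∀ j : Fin s, ρ j1 ≤ ρ j := by
  have hmain := moonshine_floor_minimizer_eq_rho_minimizer_general V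
    (fun i => have := hsimple i; nontrivial_of_simple_fdRep (V i))
    (c := fun g n => c g n) (m := fun i n => m i n) (by exact_mod_cast hm) htop
    (a := fun g => if orderOf g = e2 then (ε g : ℝ) else 0)
    (isLittleO_sub_ite_orderOf_mul he2.2 hord2 hhigher)
    (fun j => by simpa [Finset.sum_filter, apply_ite Complex.ofReal] using hρ j)
  simpa only [Int.floor_div_natCast, Int.floor_natCast, ← Int.natCast_div, Nat.cast_le] using hmain
end
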